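/- arXiv:1506.06002 — 3 statements merged into one kernel-verified Lean document; each statement's English description precedes it below -/
import Mathlib

section
/- Fix d ∈ {2,7,11} and let s ∈ ℝ. The vertical translation matrix T_{(0,s)} = [[1,0,is/2],[0,1,0],[0,0,1]] belongs to Γ_s^(d) if and only if s = 2n/√d for some integer n. In other words, the vertical translations contained in the stabilizer of q_∞ in Γ_s^(d) form the infinite cyclic group generated by vertical translation by 2/√d. -/
noncomputable section

open Matrix

/-- The Hermitian form matrix `J`. -/
def matJ : Matrix (Fin 3) (Fin 3) ℂ := !![0,0,1; 0,1,0; 1,0,0]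

/-- Membership in `U(2,1;J)`. -/
def inU21 (M : Matrix (Fin 3) (Fin 3) ℂ) : Prop := IsUnit M ∧ Mᴴ * matJ * M = matJ

/-- `i√d`. -/
def isqd (d : ℕ) : ℂ := Complex.I * (Real.sqrt d : ℂ)

/-- The ℤ-module generator of `O_d` over `ℤ`: `ω_d = (1+i√d)/2` if `d ≡ 3 (mod 4)`,
and `i√d` otherwise. -/
def OdGen (d : ℕ) : ℂ :=
  if d % 4 = 3 then (1 + Complex.I * (Real.sqrt d : ℂ)) / 2
  else Complex.I * (Real.sqrt d : ℂ)

/-- Membership in the ring of integers `O_d`. -/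
def inOd (d : ℕ) (z : ℂ) : Prop := ∃ a b : ℤ, z = (a : ℂ) + (b : ℂ) * OdGen d

/-- The sister group `Γ_s^(d)`. -/
def GammaSd (d : ℕ) (M : Matrix (Fin 3) (Fin 3) ℂ) : Prop :=
  inU21 M ∧ inOd d (M 0 0) ∧ inOd d (M 0 1) ∧ inOd d (M 1 1) ∧ inOd d (M 1 2) ∧
    inOd d (M 2 2) ∧ inOd d (isqd d * M 0 2) ∧ inOd d (M 1 0 / isqd d) ∧
    inOd d (M 2 0 / isqd d) ∧ inOd d (M 2 1 / isqd d)

/-- For `d ∈ {2,7,11}`, the vertical translation `T_{(0,s)}` lies in `Γ_s^(d)` iff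
`s = 2n/√d` for some integer `n`. -/
theorem vertical_translations_in_gammaSd :
    ∀ d ∈ ({2, 7, 11} : Set ℕ), ∀ s : ℝ,
      (GammaSd d !![1, 0, Complex.I * (s : ℂ) / 2; 0, 1, 0; 0, 0, 1] ↔
        ∃ n : ℤ, s = 2 * n / Real.sqrt d) := by
  intro d hd s
  have hdpos : (0 : ℝ) < d := by
    have : 0 < d := by
      rcases hd with h | h | h <;> subst h <;> norm_num
    exact_mod_cast this
  have hs : 0 < Real.sqrt d := Real.sqrt_pos.mpr hdpos
  have key : isqd d * (Complex.I * (s : ℂ) / 2) = ((-(Real.sqrt d * s / 2) : ℝ) : ℂ) := by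
    unfold isqd
    push_cast
    linear_combination (Real.sqrt d * s / 2 : ℂ) * Complex.I_sq
  have h0 : inOd d 0 := ⟨0, 0, by simp⟩
  have h1 : inOd d 1 := ⟨1, 0, by simp⟩
  constructor
  · rintro ⟨-, -, -, -, -, -, h, -⟩
    have h' : inOd d (isqd d * (Complex.I * (s : ℂ) / 2)) := h
    rw [key] at h'
    obtain ⟨a, b, hab⟩ := h'
    have hgen : (OdGen d).im ≠ 0 := by
      unfold OdGen
      split_ifs
      · simp [hs.ne']
      · simp [hs.ne']
    have him := congrArg Complex.im hab
    have hb : (b : ℝ) = 0 := by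
      simp only [Complex.ofReal_im, Complex.add_im, Complex.mul_im, Complex.intCast_im,
        Complex.intCast_re, zero_mul, zero_add, add_zero] at him
      rcases mul_eq_zero.mp him.symm with h | h
      · exact h
      · exact absurd h hgen
    have hre := congrArg Complex.re hab
    simp only [Complex.ofReal_re, Complex.add_re, Complex.mul_re, Complex.intCast_im,
        Complex.intCast_re, zero_mul, hb, sub_zero, add_zero] at hre
    refine ⟨-a, ?_⟩
    rw [eq_div_iff hs.ne']
    push_cast
    linarith
  · rintro ⟨n, hn⟩
    have hmul : s * Real.sqrt d = 2 * n := by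
      rw [hn, div_mul_cancel₀ _ hs.ne']
    refine ⟨⟨?_, ?_⟩, h1, h0, h1, h0, h1, ?_, ?_, ?_, ?_⟩
    · rw [Matrix.isUnit_iff_isUnit_det]
      simp [Matrix.det_fin_three]
    · have h2 : (starRingEnd ℂ) 2 = 2 := Complex.conj_ofNat 2
      ext i j
      fin_cases i <;> fin_cases j <;>
        simp [matJ, Matrix.mul_apply, Fin.sum_univ_three, Matrix.conjTranspose_apply, h2] <;> ring
    · change inOd d (isqd d * (Complex.I * (s : ℂ) / 2))
      rw [key]
      refine ⟨-n, 0, ?_⟩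
      have : -(Real.sqrt d * s / 2) = -(n : ℝ) := by linarith
      rw [this]
      simp
    · change inOd d (0 / isqd d)
      simpa using h0
    · change inOd d (0 / isqd d)
      simpa using h0
    · change inOd d (0 / isqd d)
      simpa using h0
end
end

section
/- Fix d ∈ {2,7,11} and let M ∈ Γ_s^(d) fix the point q_∞, i.e. M₂₁ = M₃₁ = 0. Then M is upper triangular (M₃₂ = 0 as well), its diagonal entries satisfy M₁₁ = M₃₃ ∈ {1,−1} and M₂₂ ∈ {1,−1}. In particular the stabilizer of q_∞ in Γ_s^(d) contains no Heisenberg dilations. -/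
noncomputable section

open Matrix

/-- Elements of `O_d` have integral norm, and those of norm one are `1` and `-1`. -/
theorem inOd_norm {d : ℕ} (hd : d ∈ ({2, 7, 11} : Set ℕ)) {z : ℂ} (hz : inOd d z) :
    (∃ n : ℤ, Complex.normSq z = n) ∧ (Complex.normSq z = 1 → z = 1 ∨ z = -1) := by
  obtain ⟨a, b, rfl⟩ := hz
  have key : ∃ c e : ℤ, 2 ≤ e ∧ c ^ 2 = c ∧
      Complex.normSq ((a : ℂ) + (b : ℂ) * OdGen d) =
        ((a ^ 2 + c * a * b + e * b ^ 2 : ℤ) : ℝ) := by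
    have hs : Real.sqrt d * Real.sqrt d = d := Real.mul_self_sqrt (Nat.cast_nonneg d)
    rcases hd with rfl | rfl | rfl
    · refine ⟨0, 2, by norm_num, by norm_num, ?_⟩
      push_cast at hs
      simp [OdGen, Complex.normSq_apply]
      linear_combination (b : ℝ) ^ 2 * hs
    · refine ⟨1, 2, by norm_num, by norm_num, ?_⟩
      push_cast at hs
      simp [OdGen, Complex.normSq_apply]
      linear_combination (b : ℝ) ^ 2 / 4 * hs
    · refine ⟨1, 3, by norm_num, by norm_num, ?_⟩
      push_cast at hs
      simp [OdGen, Complex.normSq_apply]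
      linear_combination (b : ℝ) ^ 2 / 4 * hs
  obtain ⟨c, e, he, hc, hn⟩ := key
  refine ⟨⟨_, hn⟩, fun h1 => ?_⟩
  rw [hn] at h1
  have h2 : a ^ 2 + c * a * b + e * b ^ 2 = 1 := by exact_mod_cast h1
  have hb : b = 0 := by
    by_contra hb
    have hb2 : 1 ≤ b ^ 2 := by
      have : 0 < b ^ 2 := by positivity
      omega
    have hc1 : c = 0 ∨ c = 1 := by
      rcases eq_or_ne c 0 with h | h
      · exact Or.inl h
      · right
        apply mul_left_cancel₀ h
        linarith [hc]
    rcases hc1 with rfl | rfl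
    · nlinarith [sq_nonneg a]
    · nlinarith [sq_nonneg (2 * a + b)]
  subst hb
  have ha : a ^ 2 = 1 := by linarith
  rcases eq_or_eq_neg_of_sq_eq_sq a 1 (by rw [ha]; norm_num) with rfl | rfl <;> simp

/-- For `d ∈ {2,7,11}`, every element of `Γ_s^(d)` fixing `q_∞` (i.e. with
`M₂₁ = M₃₁ = 0`) is upper triangular with diagonal entries `M₁₁ = M₃₃ ∈ {1,−1}` and
`M₂₂ ∈ {1,−1}`; in particular the stabilizer of `q_∞` contains no Heisenberg dilations. -/
theorem gammaSd_stabilizer_structure :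
    ∀ d ∈ ({2, 7, 11} : Set ℕ),
      ∀ M : Matrix (Fin 3) (Fin 3) ℂ, GammaSd d M → M 1 0 = 0 → M 2 0 = 0 →
        M 2 1 = 0 ∧ M 0 0 = M 2 2 ∧ (M 0 0 = 1 ∨ M 0 0 = -1) ∧
        (M 1 1 = 1 ∨ M 1 1 = -1) := by
  intro d hd M hM h10 h20
  obtain ⟨⟨-, hU⟩, h00, -, h11, -, h22, -, -, -, -⟩ := hM
  have e01 := congrFun (congrFun hU 0) 1
  have e02 := congrFun (congrFun hU 0) 2
  have e11 := congrFun (congrFun hU 1) 1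
  simp [Matrix.mul_apply, Fin.sum_univ_three, matJ, h10, h20] at e01 e02 e11
  have hne : M 0 0 ≠ 0 := by
    intro h
    simp [h] at e02
  have h21 : M 2 1 = 0 := by
    rcases e01 with h | h
    · exact absurd h hne
    · exact h
  simp [h21] at e11
  have n11 : Complex.normSq (M 1 1) = 1 := by
    rw [← Complex.normSq_eq_conj_mul_self] at e11
    exact_mod_cast e11
  obtain ⟨⟨m, hm⟩, u0⟩ := inOd_norm hd h00
  obtain ⟨⟨n, hn⟩, -⟩ := inOd_norm hd h22
  have hmn : m * n = 1 := by
    have h := congrArg Complex.normSq e02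
    rw [Complex.normSq_mul, Complex.normSq_conj, hm, hn, Complex.normSq_one] at h
    exact_mod_cast h
  have hm0 : 0 ≤ m := by
    have := Complex.normSq_nonneg (M 0 0)
    rw [hm] at this
    exact_mod_cast this
  have hm1 : m = 1 := Int.eq_one_of_mul_eq_one_right hm0 hmn
  have h0 := u0 (by rw [hm, hm1]; norm_num)
  refine ⟨h21, ?_, h0, (inOd_norm hd h11).2 n11⟩
  rcases h0 with h | h
  · rw [h] at e02 ⊢
    simpa using e02.symm
  · rw [h] at e02 ⊢
    simp at e02
    linear_combination e02
end
end

section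
/- Every M ∈ Γ_s^(11) with M₂₁ = M₃₁ = 0 can be written as ε·W, where ε ∈ {1,−1} and W is a finite product of the matrices R₁ = [[1,0,0],[0,−1,0],[0,0,1]], R₂ = [[1,1,iω₁₁/√11],[0,−1,1],[0,0,1]], R₃ = [[1,ω̄₁₁,i(−1+3ω₁₁)/√11],[0,−1,ω₁₁],[0,0,1]], T = [[1,0,i/√11],[0,1,0],[0,0,1]] and their inverses, where ω₁₁ = (1+i√11)/2. In other words, the stabilizer of q_∞ in Γ_s^(11) is generated, modulo ±I, by R₁, R₂, R₃ and T. -/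
noncomputable section

open Matrix

/-- `i√11`. -/
def isq11 : ℂ := Complex.I * (Real.sqrt 11 : ℂ)

/-- `ω₁₁ = (1 + i√11)/2`. -/
def ω₁₁ : ℂ := (1 + Complex.I * (Real.sqrt 11 : ℂ)) / 2

/-- Membership in the ring of integers `O₁₁ = ℤ + ℤ·ω₁₁`. -/
def inO11 (z : ℂ) : Prop := ∃ a b : ℤ, z = (a : ℂ) + (b : ℂ) * ω₁₁

/-- The sister group `Γ_s^(11)`. -/
def GammaS11 (M : Matrix (Fin 3) (Fin 3) ℂ) : Prop :=
  inU21 M ∧ inO11 (M 0 0) ∧ inO11 (M 0 1) ∧ inO11 (M 1 1) ∧ inO11 (M 1 2) ∧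
    inO11 (M 2 2) ∧ inO11 (isq11 * M 0 2) ∧ inO11 (M 1 0 / isq11) ∧
    inO11 (M 2 0 / isq11) ∧ inO11 (M 2 1 / isq11)

def R₁ : Matrix (Fin 3) (Fin 3) ℂ := !![1,0,0; 0,-1,0; 0,0,1]

def R₂ : Matrix (Fin 3) (Fin 3) ℂ :=
  !![1, 1, Complex.I * ω₁₁ / (Real.sqrt 11 : ℂ); 0, -1, 1; 0, 0, 1]

def R₃ : Matrix (Fin 3) (Fin 3) ℂ :=
  !![1, (starRingEnd ℂ) ω₁₁, Complex.I * (-1 + 3 * ω₁₁) / (Real.sqrt 11 : ℂ);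
     0, -1, ω₁₁; 0, 0, 1]

def T : Matrix (Fin 3) (Fin 3) ℂ :=
  !![1, 0, Complex.I / (Real.sqrt 11 : ℂ); 0, 1, 0; 0, 0, 1]

lemma aux_sq : isq11 * isq11 = -11 := by
  have h : ((Real.sqrt 11 : ℝ) : ℂ) * (Real.sqrt 11 : ℝ) = 11 := by
    rw [← Complex.ofReal_mul, Real.mul_self_sqrt (by norm_num)]; norm_num
  unfold isq11
  linear_combination (Complex.I * Complex.I) * h + 11 * Complex.I_mul_I

lemma aux_ne : isq11 ≠ 0 := by
  intro h; have := aux_sq; rw [h] at this; norm_num at this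

lemma aux_conj : (starRingEnd ℂ) isq11 = -isq11 := by
  simp [isq11]

lemma aux_om : ω₁₁ = (1 + isq11) / 2 := rfl

lemma aux_om_sq : ω₁₁ * ω₁₁ = ω₁₁ - 3 := by
  rw [aux_om]; linear_combination (1/4) * aux_sq

lemma aux_isq : isq11 = 2 * ω₁₁ - 1 := by rw [aux_om]; ring

lemma aux_om_conj : (starRingEnd ℂ) ω₁₁ = 1 - ω₁₁ := by
  have h2 : (starRingEnd ℂ) 2 = 2 := Complex.conj_ofNat 2
  rw [aux_om, map_div₀, map_add, map_one, aux_conj, h2]; ring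

lemma aux_div (z : ℂ) : Complex.I * z / (Real.sqrt 11 : ℂ) = -z / isq11 := by
  have h : (Real.sqrt 11 : ℂ) ≠ 0 := by
    intro h; apply aux_ne; simp only [isq11, h, mul_zero]
  unfold isq11
  field_simp
  simp

/-- Unipotent elements with integral parameters. -/
def auxG (p q k : ℤ) : Matrix (Fin 3) (Fin 3) ℂ :=
  !![1, -((p : ℂ) + q * (1 - ω₁₁)), ((k : ℂ) - (p^2 + p*q + 3*q^2) * ω₁₁) / isq11;
     0, 1, (p : ℂ) + q * ω₁₁; 0, 0, 1]

lemma auxG_T (p q k : ℤ) : T * auxG p q k = auxG p q (k - 1) := by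
  have h := aux_div 1
  rw [mul_one] at h
  have hs := aux_ne
  ext i j
  fin_cases i <;> fin_cases j <;>
    simp [T, auxG, Matrix.mul_apply, Fin.sum_univ_three, h]
  field_simp; ring

lemma auxG_R2 (p q k : ℤ) : (R₁ * R₂) * auxG p q k = auxG (p - 1) q (k - p - 6 * q) := by
  have h := aux_div ω₁₁
  have hs := aux_ne
  ext i j
  fin_cases i <;> fin_cases j <;>
    simp [R₁, R₂, auxG, Matrix.mul_apply, Fin.sum_univ_three, h]
  · ring
  · field_simp
    rw [aux_isq]
    linear_combination (2 * (q : ℂ)) * aux_om_sq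
  · ring

lemma auxG_R3 (p q k : ℤ) :
    (R₁ * R₃) * auxG p q k = auxG p (q - 1) (k + 1 + 5 * p - 3 * q) := by
  have h := aux_div (-1 + 3 * ω₁₁)
  have hs := aux_ne
  ext i j
  fin_cases i <;> fin_cases j <;>
    simp [R₁, R₃, auxG, Matrix.mul_apply, Fin.sum_univ_three, h, aux_om_conj]
  · ring
  · field_simp
    rw [aux_isq]
    linear_combination (-2 * (p : ℂ) + q * (3 - 2 * ω₁₁) - 2 * q) * aux_om_sq
  · ring

def auxS : Set (Matrix (Fin 3) (Fin 3) ℂ) :=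
  {X | ∃ L : List (Matrix (Fin 3) (Fin 3) ℂ),
    (∀ A ∈ L, A ∈ ({R₁, R₂, R₃, T, R₁⁻¹, R₂⁻¹, R₃⁻¹, T⁻¹} :
        Set (Matrix (Fin 3) (Fin 3) ℂ))) ∧ X = L.prod}

lemma auxS_mul (A X : Matrix (Fin 3) (Fin 3) ℂ)
    (hA : A ∈ ({R₁, R₂, R₃, T, R₁⁻¹, R₂⁻¹, R₃⁻¹, T⁻¹} : Set (Matrix (Fin 3) (Fin 3) ℂ)))
    (hX : X ∈ auxS) : A * X ∈ auxS := by
  obtain ⟨L, hL, rfl⟩ := hX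
  refine ⟨A :: L, ?_, by simp⟩
  intro B hB
  rcases List.mem_cons.1 hB with rfl | h
  · exact hA
  · exact hL B h

lemma auxS_iff (A X : Matrix (Fin 3) (Fin 3) ℂ) (hA : A = R₁ ∨ A = R₂ ∨ A = R₃ ∨ A = T) :
    A * X ∈ auxS ↔ X ∈ auxS := by
  constructor
  · intro h
    have hu : IsUnit A.det := by
      rcases hA with rfl | rfl | rfl | rfl <;>
        simp [R₁, R₂, R₃, T, Matrix.det_fin_three]
    have h2 := auxS_mul A⁻¹ _ (by rcases hA with rfl | rfl | rfl | rfl <;> simp) h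
    rwa [Matrix.nonsing_inv_mul_cancel_left _ _ hu] at h2
  · exact auxS_mul A X (by rcases hA with rfl | rfl | rfl | rfl <;> simp)

lemma auxS_T (p q k : ℤ) : auxG p q (k - 1) ∈ auxS ↔ auxG p q k ∈ auxS := by
  rw [← auxG_T, auxS_iff _ _ (by simp)]

lemma auxS_k (p q k : ℤ) : auxG p q k ∈ auxS ↔ auxG p q 0 ∈ auxS := by
  induction k using Int.induction_on with
  | zero => rfl
  | succ n ih => rw [← ih, ← auxS_T]; simp
  | pred n ih => rw [← ih, auxS_T]

lemma auxS_p1 (p q : ℤ) : auxG (p - 1) q 0 ∈ auxS ↔ auxG p q 0 ∈ auxS := by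
  rw [← auxS_k (p - 1) q (0 - p - 6 * q), ← auxG_R2, Matrix.mul_assoc,
    auxS_iff _ _ (by simp), auxS_iff _ _ (by simp)]

lemma auxS_q1 (p q : ℤ) : auxG p (q - 1) 0 ∈ auxS ↔ auxG p q 0 ∈ auxS := by
  rw [← auxS_k p (q - 1) (0 + 1 + 5 * p - 3 * q), ← auxG_R3, Matrix.mul_assoc,
    auxS_iff _ _ (by simp), auxS_iff _ _ (by simp)]

lemma auxS_p (p q : ℤ) : auxG p q 0 ∈ auxS ↔ auxG 0 q 0 ∈ auxS := by
  induction p using Int.induction_on with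
  | zero => rfl
  | succ n ih => rw [← ih, ← auxS_p1]; simp
  | pred n ih => rw [← ih, auxS_p1]

lemma auxS_q (q : ℤ) : auxG 0 q 0 ∈ auxS ↔ auxG 0 0 0 ∈ auxS := by
  induction q using Int.induction_on with
  | zero => rfl
  | succ n ih => rw [← ih, ← auxS_q1]; simp
  | pred n ih => rw [← ih, auxS_q1]

lemma auxS_all (p q k : ℤ) : auxG p q k ∈ auxS := by
  rw [auxS_k, auxS_p, auxS_q]
  refine ⟨[], by simp, ?_⟩
  ext i j
  fin_cases i <;> fin_cases j <;> simp [auxG]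

lemma aux_norm (a b : ℤ) : (starRingEnd ℂ) ((a : ℂ) + b * ω₁₁) * ((a : ℂ) + b * ω₁₁)
    = ((a^2 + a*b + 3*b^2 : ℤ) : ℂ) := by
  simp [aux_om_conj]
  linear_combination (-(b : ℂ)^2) * aux_om_sq

lemma aux_unit (z w : ℂ) (hz : inO11 z) (hw : inO11 w) (h : (starRingEnd ℂ) z * w = 1) :
    (z = 1 ∨ z = -1) ∧ w = z := by
  obtain ⟨a, b, rfl⟩ := hz
  obtain ⟨c, d, rfl⟩ := hw
  have h1 : (starRingEnd ℂ) ((c : ℂ) + d * ω₁₁) * ((a : ℂ) + b * ω₁₁) = 1 := by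
    have := congrArg (starRingEnd ℂ) h
    rw [map_mul, Complex.conj_conj, map_one] at this
    rw [mul_comm]; exact this
  have h2 : (((a^2 + a*b + 3*b^2) * (c^2 + c*d + 3*d^2) : ℤ) : ℂ) = ((1 : ℤ) : ℂ) := by
    rw [Int.cast_mul, ← aux_norm, ← aux_norm]
    push_cast
    linear_combination h * (starRingEnd ℂ ((c : ℂ) + d * ω₁₁) * ((a : ℂ) + b * ω₁₁)) + h1
  have h3 : (a^2 + a*b + 3*b^2) * (c^2 + c*d + 3*d^2) = 1 := by exact_mod_cast h2
  have h4 : a^2 + a*b + 3*b^2 = 1 := by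
    rcases Int.eq_one_or_neg_one_of_mul_eq_one h3 with h | h
    · exact h
    · nlinarith [sq_nonneg (2*a+b), sq_nonneg b]
  have hb : b = 0 := by
    have : b^2 < 1 := by nlinarith [sq_nonneg (2*a+b), sq_nonneg b]
    exact pow_eq_zero_iff (two_ne_zero) |>.1 (le_antisymm (by omega) (sq_nonneg b))
  subst hb
  have ha : a = 1 ∨ a = -1 := by
    have h5 : (a - 1) * (a + 1) = 0 := by linarith
    rcases mul_eq_zero.1 h5 with h | h
    · left; omega
    · right; omega
  rcases ha with rfl | rfl
  · simp at h ⊢; exact h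
  · simp at h ⊢; linear_combination -h

lemma aux_main (M : Matrix (Fin 3) (Fin 3) ℂ) (p q k n : ℤ)
    (h00 : M 0 0 = 1) (h10 : M 1 0 = 0) (h20 : M 2 0 = 0) (h21 : M 2 1 = 0)
    (h11 : M 1 1 = 1 ∨ M 1 1 = -1) (h22 : M 2 2 = 1)
    (h12 : M 1 2 = p + q * ω₁₁) (h02 : isq11 * M 0 2 = k + n * ω₁₁)
    (h01 : M 0 1 = - (M 1 1 * (p + q * (1 - ω₁₁))))
    (hn : n = -(p^2 + p * q + 3 * q^2)) : M ∈ auxS := by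
  have hc : M 0 2 = ((k : ℂ) - (p^2 + p*q + 3*q^2) * ω₁₁) / isq11 := by
    rw [eq_div_iff aux_ne, mul_comm, h02, hn]; push_cast; ring
  rcases h11 with h11 | h11
  · have : M = auxG p q k := by
      ext i j
      fin_cases i <;> fin_cases j <;> simp [auxG, *]
    rw [this]; exact auxS_all _ _ _
  · have : R₁ * M = auxG (-p) (-q) k := by
      ext i j
      fin_cases i <;> fin_cases j <;>
        simp [auxG, R₁, Matrix.mul_apply, Fin.sum_univ_three, *]
      all_goals ring
    rw [← auxS_iff R₁ M (by simp), this]; exact auxS_all _ _ _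

lemma aux_entries (M : Matrix (Fin 3) (Fin 3) ℂ) (h : Mᴴ * matJ * M = matJ) (i j : Fin 3) :
    (starRingEnd ℂ) (M 2 i) * M 0 j + (starRingEnd ℂ) (M 1 i) * M 1 j
      + (starRingEnd ℂ) (M 0 i) * M 2 j = matJ i j := by
  rw [← h]
  simp [matJ, Matrix.mul_apply, Fin.sum_univ_three]

lemma aux_neg (z : ℂ) (h : inO11 z) : inO11 (-z) := by
  obtain ⟨a, b, rfl⟩ := h
  exact ⟨-a, -b, by push_cast; ring⟩

lemma aux_pos (M : Matrix (Fin 3) (Fin 3) ℂ) (hU : Mᴴ * matJ * M = matJ)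
    (o11 : inO11 (M 1 1)) (o12 : inO11 (M 1 2)) (o02 : inO11 (isq11 * M 0 2))
    (h00 : M 0 0 = 1) (h22 : M 2 2 = 1) (h10 : M 1 0 = 0) (h20 : M 2 0 = 0) : M ∈ auxS := by
  have e01 := aux_entries M hU 0 1
  have e11 := aux_entries M hU 1 1
  have e21 := aux_entries M hU 2 1
  have e22 := aux_entries M hU 2 2
  simp [h00, h10, h20, matJ] at e01
  simp [e01, matJ] at e11
  simp [e01, h22, matJ] at e21
  simp [h22, matJ] at e22
  obtain ⟨p, q, h12⟩ := o12
  obtain ⟨k, n, h02⟩ := o02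
  refine aux_main M p q k n h00 h10 h20 e01 (aux_unit _ _ o11 o11 e11).1 h22 h12 h02 ?_ ?_
  · rw [h12] at e21
    simp [aux_om_conj] at e21
    linear_combination e21
  · have hc := congrArg (starRingEnd ℂ) h02
    simp [aux_conj, aux_om_conj] at hc
    rw [h12, aux_norm] at e22
    have hs := aux_isq
    have : isq11 * ((n : ℂ) + ((p^2 + p * q + 3 * q^2 : ℤ) : ℂ)) = 0 := by
      linear_combination isq11 * e22 - h02 + hc + n * hs
    have h3 := (mul_eq_zero.1 this).resolve_left aux_ne
    have h4 : n + (p^2 + p * q + 3 * q^2) = 0 := by exact_mod_cast h3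
    linarith

/-- The stabilizer of `q_∞` in `Γ_s^(11)` is generated, modulo `±I`, by `R₁, R₂, R₃, T`. -/
theorem gammaS11_stabilizer_generated (M : Matrix (Fin 3) (Fin 3) ℂ) (hM : GammaS11 M)
    (h21 : M 1 0 = 0) (h31 : M 2 0 = 0) :
    ∃ (ε : ℂ) (L : List (Matrix (Fin 3) (Fin 3) ℂ)),
      (ε = 1 ∨ ε = -1) ∧
      (∀ A ∈ L, A ∈ ({R₁, R₂, R₃, T, R₁⁻¹, R₂⁻¹, R₃⁻¹, T⁻¹} :
        Set (Matrix (Fin 3) (Fin 3) ℂ))) ∧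
      M = ε • L.prod := by
  obtain ⟨⟨-, hU⟩, o00, -, o11, o12, o22, o02, -⟩ := hM
  have e02 := aux_entries M hU 0 2
  simp [h21, h31, matJ] at e02
  obtain ⟨h00, h22⟩ := aux_unit _ _ o00 o22 e02
  rcases h00 with h00 | h00
  · obtain ⟨L, hL, h⟩ := aux_pos M hU o11 o12 o02 h00 (h22.trans h00) h21 h31
    exact ⟨1, L, Or.inl rfl, hL, by rw [one_smul, h]⟩
  · obtain ⟨L, hL, h⟩ := aux_pos (-M) (by simpa using hU) (aux_neg _ o11) (aux_neg _ o12)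
      (by simpa using aux_neg _ o02) (by simp [h00]) (by simp [h22, h00])
      (by simp [h21]) (by simp [h31])
    exact ⟨-1, L, Or.inr rfl, hL, by rw [← h]; simp⟩
end
end
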